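/- Let k ≥ 3, let n ∈ I_k, and let Z(n) denote the number of zeros in any optimal (minimal-weight) k-bit BSD representation of n. Then for 0 ≤ v < |I_{k-2}|: Z(a_k + v) = Z(a_{k-2} + v) + 1 and Z(c_k + v) = Z(2^{k-2} - (a_{k-2} + v)) + 1, where a_k = min I_k and c_k = 2^{k-1} + a_{k-2}. -/

import Mathlib

open Polynomial in
/-- The Stern polynomial: `B 0 = 0`, `B 1 = 1`, `B (2n) = t * B n`, `B (2n+1) = B n + B (n+1)`. -/
noncomputable def sternP : ℕ → Polynomial ℕ
  | 0 => 0
  | 1 => 1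
  | n + 2 =>
    if (n + 2) % 2 = 0 then X * sternP (n / 2 + 1)
    else sternP (n / 2 + 1) + sternP (n / 2 + 2)
decreasing_by all_goals omega

/-- The digits of a BSD representation lie in {-1, 0, 1}. -/
def IsBSDDigits {i : ℕ} (b : Fin i → ℤ) : Prop := ∀ j, b j ∈ ({-1, 0, 1} : Set ℤ)

/-- The value represented by the digit string `b` (least significant digit `b 0`). -/
def bsdVal {i : ℕ} (b : Fin i → ℤ) : ℤ := ∑ j : Fin i, b j * 2 ^ (j : ℕ)

/-- `b` is a (not necessarily reduced) non-adjacent form digit string of length `k`: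
digits in {-1,0,1}, no two adjacent digits both nonzero, and nonzero leading digit
(when `k > 0`). -/
def IsReducedNAF {k : ℕ} (b : Fin k → ℤ) : Prop :=
  IsBSDDigits b ∧
  (∀ j : Fin k, ∀ h : (j : ℕ) + 1 < k, b j = 0 ∨ b ⟨(j : ℕ) + 1, h⟩ = 0) ∧
  (∀ h : 0 < k, b ⟨k - 1, Nat.sub_lt h one_pos⟩ ≠ 0)

/-- `m` has a reduced NAF representation of bitlength `k`. -/
def HasNAFLen (m : ℤ) (k : ℕ) : Prop :=
  ∃ b : Fin k → ℤ, IsReducedNAF b ∧ bsdVal b = m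

/-- `I k`: the set of positive integers of NAF-bitlength `k`. -/
def NAFInterval (k : ℕ) : Set ℕ := {n : ℕ | HasNAFLen (n : ℤ) k}

/-- `a k = min I k`: `a 1 = 1`, `a 2 = 2`, `a k = 2^(k-2) + a (k-2)`. -/
def aseq : ℕ → ℕ
  | 0 => 0
  | 1 => 1
  | 2 => 2
  | k + 3 => 2 ^ (k + 1) + aseq (k + 1)

/-- The NAF-bitlength of `n`. -/
noncomputable def nafLen (n : ℕ) : ℕ := sInf {k : ℕ | HasNAFLen (n : ℤ) k}

/-- The minimal Hamming weight of a BSD representation of `n` of length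
equal to its NAF-bitlength. -/
noncomputable def minWeight (n : ℕ) : ℕ :=
  sInf {w : ℕ | ∃ b : Fin (nafLen n) → ℤ,
    IsBSDDigits b ∧ bsdVal b = (n : ℤ) ∧ {j | b j ≠ 0}.ncard = w}

/-- `Z n`: the number of zeros in an optimal (minimal-weight) BSD representation of `n`
of length equal to its NAF-bitlength. -/
noncomputable def Zfun (n : ℕ) : ℕ := nafLen n - minWeight n

/-- `M n`: the number of optimal (minimal-weight) BSD representations of `n`
of length equal to its NAF-bitlength. -/
noncomputable def Mfun (n : ℕ) : ℕ :=
  {b : Fin (nafLen n) → ℤ |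
    IsBSDDigits b ∧ bsdVal b = (n : ℤ) ∧ {j | b j ≠ 0}.ncard = minWeight n}.ncard

/-!
The NAF weight `w` satisfies `w (2 * q) = w q` and `w (4 * q ± 1) = w q + 1`. It is minimal among
all BSD representations because `w (2 * q ± 1) ≤ w q + 1`, so a NAF of length `k` gives
`Z n = k - w n`. For `k ≥ 1`, `m ∈ I k` means `2 ^ k < 3 * m < 2 ^ (k + 1)`, and
`w (2 ^ i + r) = w r + 1` whenever `3 * |r| ≤ 2 ^ i`. Writing `m = 2 ^ (k - 1) + r` and
`2 ^ k - m = 2 ^ (k - 1) - r` shows that `m` and its reflection `2 ^ k - m` have the same weight.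
Both `2 ^ k + m = 2 ^ (k + 1) - (2 ^ k - m)` and `2 ^ (k + 1) + m` therefore have two more
NAF digits than `m` and one more unit of weight, hence exactly one more zero.
-/

theorem eq_two_mul_or_eq_four_mul_add_unit (n : ℤ) :
    ∃ q, n = 2 * q ∨ ∃ d, IsUnit d ∧ n = 4 * q + d := by
  rcases Int.even_or_odd' n with ⟨q, rfl | rfl⟩
  · exact ⟨q, .inl rfl⟩
  · rcases Int.even_or_odd' q with ⟨p, rfl | rfl⟩
    · exact ⟨p, .inr ⟨1, isUnit_one, by ring⟩⟩
    · exact ⟨p + 1, .inr ⟨-1, isUnit_one.neg, by ring⟩⟩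

@[elab_as_elim]
theorem naf_induction {motive : ℤ → Prop} (zero : motive 0)
    (two_mul : ∀ q, motive q → motive (2 * q))
    (four_mul_add : ∀ q d, IsUnit d → motive q → motive (4 * q + d)) (n : ℤ) : motive n := by
  induction hN : n.natAbs using Nat.strong_induction_on generalizing n with
  | _ N ih =>
    obtain rfl | hn := eq_or_ne n 0
    · exact zero
    obtain ⟨q, rfl | ⟨d, hd, rfl⟩⟩ := eq_two_mul_or_eq_four_mul_add_unit n
    · exact two_mul q (ih q.natAbs (by omega) q rfl)
    · have hlt : q.natAbs < N := by rcases Int.isUnit_iff.1 hd with rfl | rfl <;> omega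
      exact four_mul_add q d hd (ih q.natAbs hlt q rfl)

/-- The Hamming weight of the non-adjacent form of `n`. An odd `n` is `4 * q ± 1` with
`q = (n + 1) / 4`, and its two lowest NAF digits are `0` and `±1`. -/
def nafWeight (n : ℤ) : ℕ :=
  if n = 0 then 0
  else if Even n then nafWeight (n / 2)
  else nafWeight ((n + 1) / 4) + 1
termination_by n.natAbs
decreasing_by all_goals grind

@[simp]
theorem nafWeight_zero : nafWeight 0 = 0 := by
  rw [nafWeight, if_pos rfl]

@[simp]
theorem nafWeight_two_mul (q : ℤ) : nafWeight (2 * q) = nafWeight q := by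
  obtain rfl | hq := eq_or_ne q 0
  · rfl
  · rw [nafWeight, if_neg (by omega), if_pos (even_two_mul q),
      Int.mul_ediv_cancel_left q two_ne_zero]

theorem nafWeight_four_mul_add {d : ℤ} (hd : IsUnit d) (q : ℤ) :
    nafWeight (4 * q + d) = nafWeight q + 1 := by
  have hodd : ¬ Even (4 * q + d) ∧ (4 * q + d + 1) / 4 = q := by
    rcases Int.isUnit_iff.1 hd with rfl | rfl <;> grind
  rw [nafWeight, if_neg (by grind), if_neg hodd.1, hodd.2]

theorem nafWeight_two_mul_add_of_even {d n : ℤ} (hd : IsUnit d) (hn : Even n) :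
    nafWeight (2 * n + d) = nafWeight n + 1 := by
  obtain ⟨q, rfl⟩ := even_iff_exists_two_mul.1 hn
  rw [nafWeight_two_mul, ← nafWeight_four_mul_add hd]
  congr 1
  ring

@[simp]
theorem nafWeight_neg (n : ℤ) : nafWeight (-n) = nafWeight n := by
  induction n using naf_induction with
  | zero => rfl
  | two_mul q ih => rw [← mul_neg, nafWeight_two_mul, nafWeight_two_mul, ih]
  | four_mul_add q d hd ih =>
    rw [neg_add, ← mul_neg, nafWeight_four_mul_add hd.neg, nafWeight_four_mul_add hd, ih]

@[simp]
theorem nafWeight_abs (n : ℤ) : nafWeight |n| = nafWeight n := by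
  rcases abs_choice n with h | h <;> simp [h]

theorem nafWeight_two_mul_add_le {d : ℤ} (hd : IsUnit d) (n : ℤ) :
    nafWeight (2 * n + d) ≤ nafWeight n + 1 := by
  induction n using naf_induction generalizing d with
  | zero => simpa using (nafWeight_four_mul_add hd 0).le
  | two_mul q => exact (nafWeight_two_mul_add_of_even hd (even_two_mul q)).le
  | four_mul_add q e he ih =>
    rw [nafWeight_four_mul_add he]
    obtain rfl | rfl : d = e ∨ d = -e := by
      rw [Int.isUnit_iff] at hd he; omega
    · -- Adjacent equal digits `d d` are recoded as `d 0 (-d)`.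
      rw [show 2 * (4 * q + d) + d = 4 * (2 * q + d) + -d by ring, nafWeight_four_mul_add hd.neg]
      exact Nat.succ_le_succ (ih hd)
    · rw [show 2 * (4 * q + e) + -e = 4 * (2 * q) + e by ring, nafWeight_four_mul_add he,
        nafWeight_two_mul]
      exact Nat.le_succ _

theorem nafWeight_two_pow (i : ℕ) : nafWeight (2 ^ i) = 1 := by
  induction i with
  | zero => simpa using nafWeight_four_mul_add isUnit_one 0
  | succ i ih => rw [pow_succ', nafWeight_two_mul, ih]

theorem nafWeight_two_pow_add {i : ℕ} {r : ℤ} (h : 3 * |r| ≤ 2 ^ i) :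
    nafWeight (2 ^ i + r) = nafWeight r + 1 := by
  induction r using naf_induction generalizing i with
  | zero => simp [nafWeight_two_pow]
  | two_mul q ih =>
    obtain _ | i := i
    · obtain rfl : q = 0 := by grind
      simpa using nafWeight_two_pow 0
    · rw [pow_succ'] at h ⊢
      rw [← mul_add, nafWeight_two_mul, nafWeight_two_mul, ih (by grind)]
  | four_mul_add q d hd ih =>
    have hd' := Int.isUnit_iff.1 hd
    match i with
    | 0 | 1 => grind
    | i + 2 =>
      rw [show (2 : ℤ) ^ (i + 2) = 4 * 2 ^ i by ring] at h ⊢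
      rw [← add_assoc, ← mul_add, nafWeight_four_mul_add hd, nafWeight_four_mul_add hd,
        ih (by grind)]

theorem bsdVal_fin_zero (b : Fin 0 → ℤ) : bsdVal b = 0 :=
  Fin.sum_univ_zero _

theorem bsdVal_cons {k : ℕ} (d : ℤ) (b : Fin k → ℤ) :
    bsdVal (Fin.cons d b : Fin (k + 1) → ℤ) = 2 * bsdVal b + d := by
  simp only [bsdVal, Fin.sum_univ_succ, Fin.cons_zero, Fin.cons_succ, Finset.mul_sum,
    Fin.val_zero, Fin.val_succ, pow_zero, mul_one, pow_succ', mul_left_comm, add_comm]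

theorem isBSDDigits_cons {k : ℕ} {d : ℤ} {b : Fin k → ℤ} :
    IsBSDDigits (Fin.cons d b : Fin (k + 1) → ℤ) ↔
      d ∈ ({-1, 0, 1} : Set ℤ) ∧ IsBSDDigits b := by
  simp only [IsBSDDigits, Fin.forall_fin_succ, Fin.cons_zero, Fin.cons_succ]

theorem eq_zero_or_isUnit_of_mem_digits {d : ℤ} (hd : d ∈ ({-1, 0, 1} : Set ℤ)) :
    d = 0 ∨ IsUnit d := by
  rw [Int.isUnit_iff]
  rcases hd with rfl | rfl | rfl <;> simp

theorem IsBSDDigits.even_bsdVal_iff {k : ℕ} {b : Fin (k + 1) → ℤ} (hb : IsBSDDigits b) :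
    Even (bsdVal b) ↔ b 0 = 0 := by
  have hval : bsdVal b = 2 * bsdVal (Fin.tail b) + b 0 := by
    rw [← bsdVal_cons, Fin.cons_self_tail]
  rcases hb 0 with h | h | h <;> grind

theorem isReducedNAF_cons {k : ℕ} {d : ℤ} {b : Fin k → ℤ} :
    IsReducedNAF (Fin.cons d b : Fin (k + 1) → ℤ) ↔
      d ∈ ({-1, 0, 1} : Set ℤ) ∧ (d = 0 ∨ Even (bsdVal b)) ∧ (k = 0 → d ≠ 0) ∧
        IsReducedNAF b := by
  simp only [IsReducedNAF, isBSDDigits_cons]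
  cases k with
  | zero =>
    constructor
    · rintro ⟨⟨hd, hb⟩, -, hlead⟩
      exact ⟨hd, .inr (by simp [bsdVal_fin_zero]), fun _ => hlead Nat.one_pos, hb,
        fun j => j.elim0, fun h => h.false.elim⟩
    · rintro ⟨hd, -, hlead, hb, -, -⟩
      exact ⟨⟨hd, hb⟩, fun j h => by omega, fun _ => hlead rfl⟩
  | succ k =>
    constructor
    · rintro ⟨⟨hd, hb⟩, hadj, hlead⟩
      exact ⟨hd, (hadj 0 (by simp)).imp_right hb.even_bsdVal_iff.2, nofun, hb,
        fun j h => hadj j.succ (by simpa using h), fun _ => hlead (k + 1).succ_pos⟩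
    · rintro ⟨hd, heven, -, hb, hadj, hlead⟩
      exact ⟨⟨hd, hb⟩, Fin.cases (fun _ => heven.imp_right hb.even_bsdVal_iff.1)
        (fun j h => hadj j (by simpa using h)), fun _ => hlead k.succ_pos⟩

theorem hammingNorm_cons {k : ℕ} (d : ℤ) (b : Fin k → ℤ) :
    hammingNorm (Fin.cons d b : Fin (k + 1) → ℤ) =
      hammingNorm b + if d = 0 then 0 else 1 := by
  by_cases hd : d = 0 <;> simp [hammingNorm, Fin.card_filter_univ_succ, hd]

theorem ncard_ne_zero_eq_hammingNorm {k : ℕ} (b : Fin k → ℤ) :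
    {j | b j ≠ 0}.ncard = hammingNorm b := by
  rw [hammingNorm, ← Set.ncard_coe_finset, Finset.coe_filter_univ]

theorem IsBSDDigits.nafWeight_bsdVal_le {k : ℕ} {b : Fin k → ℤ} (hb : IsBSDDigits b) :
    nafWeight (bsdVal b) ≤ hammingNorm b := by
  induction b using Fin.consInduction with
  | elim0 => simp [bsdVal_fin_zero]
  | cons d b ih =>
    obtain ⟨hd, htail⟩ := isBSDDigits_cons.1 hb
    rw [bsdVal_cons, hammingNorm_cons]
    obtain rfl | hd := eq_zero_or_isUnit_of_mem_digits hd
    · simpa using ih htail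
    · rw [if_neg hd.ne_zero]
      exact (nafWeight_two_mul_add_le hd _).trans (Nat.succ_le_succ (ih htail))

theorem IsReducedNAF.nafWeight_bsdVal {k : ℕ} {b : Fin k → ℤ} (hb : IsReducedNAF b) :
    nafWeight (bsdVal b) = hammingNorm b := by
  induction b using Fin.consInduction with
  | elim0 => simp [bsdVal_fin_zero, hammingNorm]
  | cons d b ih =>
    obtain ⟨hd, heven, -, htail⟩ := isReducedNAF_cons.1 hb
    rw [bsdVal_cons, hammingNorm_cons, ← ih htail]
    obtain rfl | hd := eq_zero_or_isUnit_of_mem_digits hd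
    · simp
    · rw [if_neg hd.ne_zero,
        nafWeight_two_mul_add_of_even hd (heven.resolve_left hd.ne_zero)]

theorem hasNAFLen_zero {n : ℤ} : HasNAFLen n 0 ↔ n = 0 := by
  constructor
  · rintro ⟨b, -, rfl⟩
    exact bsdVal_fin_zero b
  · rintro rfl
    exact ⟨Fin.elim0, ⟨fun j => j.elim0, fun j => j.elim0, fun h => h.false.elim⟩,
      bsdVal_fin_zero _⟩

theorem hasNAFLen_succ {n : ℤ} {k : ℕ} :
    HasNAFLen n (k + 1) ↔ ∃ d ∈ ({-1, 0, 1} : Set ℤ), ∃ q,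
      n = 2 * q + d ∧ (d = 0 ∨ Even q) ∧ (k = 0 → d ≠ 0) ∧ HasNAFLen q k := by
  constructor
  · rintro ⟨b, hb, rfl⟩
    induction b using Fin.consCases with
    | _ d b =>
      obtain ⟨hd, heven, hlead, htail⟩ := isReducedNAF_cons.1 hb
      exact ⟨d, hd, bsdVal b, bsdVal_cons d b, heven, hlead, b, htail, rfl⟩
  · rintro ⟨d, hd, _, rfl, heven, hlead, b, hb, rfl⟩
    exact ⟨Fin.cons d b, isReducedNAF_cons.2 ⟨hd, heven, hlead, hb⟩, bsdVal_cons d b⟩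

theorem hasNAFLen_succ_iff_abs {n : ℤ} {k : ℕ} :
    HasNAFLen n (k + 1) ↔ 2 ^ (k + 1) < 3 * |n| ∧ 3 * |n| < 2 ^ (k + 2) := by
  induction k generalizing n with
  | zero =>
    rw [show 2 ^ (0 + 1) < 3 * |n| ∧ 3 * |n| < 2 ^ (0 + 2) ↔ n = -1 ∨ n = 1 by grind]
    simp only [hasNAFLen_succ, hasNAFLen_zero]
    constructor
    · rintro ⟨d, rfl | rfl | rfl, _, rfl, -, hlead, rfl⟩ <;> simp at hlead ⊢
    · rintro (rfl | rfl)
      exacts [⟨-1, by simp⟩, ⟨1, by simp⟩]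
  | succ k ih =>
    have hthree : ¬ (3 : ℤ) ∣ 2 ^ (k + 1) := fun h => by
      have := Int.prime_three.dvd_of_dvd_pow h
      omega
    simp only [hasNAFLen_succ (k := k + 1), ih]
    constructor
    · rintro ⟨d, rfl | rfl | rfl, q, rfl, heven, -, hlow, hupp⟩ <;> grind
    · rintro ⟨hlow, hupp⟩
      obtain ⟨q, rfl | ⟨d, hd, rfl⟩⟩ := eq_two_mul_or_eq_four_mul_add_unit n
      · exact ⟨0, by simp, q, by ring, .inl rfl, nofun, by grind, by grind⟩
      · have hd' := Int.isUnit_iff.1 hd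
        -- `6 * |q|` and `2 ^ (k + 1)` are distinct even numbers, so `d` does not affect the bounds.
        exact ⟨d, by grind, 2 * q, by ring, .inr (even_two_mul q), nofun, by grind, by grind⟩

theorem HasNAFLen.length_le {n : ℤ} {j k : ℕ} (hj : HasNAFLen n j) (hk : HasNAFLen n k) :
    j ≤ k := by
  match j, k with
  | 0, k => exact k.zero_le
  | j + 1, 0 =>
    rw [hasNAFLen_zero.1 hk, hasNAFLen_succ_iff_abs, abs_zero, mul_zero] at hj
    exact absurd hj.1 (pow_pos two_pos _).not_gt
  | j + 1, k + 1 =>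
    have hlt : (2 : ℤ) ^ (j + 1) < 2 ^ (k + 2) :=
      (hasNAFLen_succ_iff_abs.1 hj).1.trans (hasNAFLen_succ_iff_abs.1 hk).2
    exact Nat.lt_succ_iff.1 ((pow_lt_pow_iff_right₀ one_lt_two).1 hlt)

theorem nafLen_eq_of_mem {n k : ℕ} (hn : n ∈ NAFInterval k) : nafLen n = k :=
  IsLeast.csInf_eq ⟨hn, fun _ hj => HasNAFLen.length_le hn hj⟩

theorem minWeight_eq_nafWeight {n k : ℕ} (hn : n ∈ NAFInterval k) :
    minWeight n = nafWeight n := by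
  unfold minWeight
  rw [nafLen_eq_of_mem hn]
  obtain ⟨b, hb, hval⟩ := hn
  refine IsLeast.csInf_eq ⟨⟨b, hb.1, hval, ?_⟩, ?_⟩
  · rw [ncard_ne_zero_eq_hammingNorm, ← hb.nafWeight_bsdVal, hval]
  · rintro _ ⟨c, hc, hcval, rfl⟩
    rw [ncard_ne_zero_eq_hammingNorm, ← hcval]
    exact hc.nafWeight_bsdVal_le

theorem nafWeight_le_of_mem {n k : ℕ} (hn : n ∈ NAFInterval k) : nafWeight n ≤ k := by
  obtain ⟨b, hb, hval⟩ := hn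
  simpa [← hval, hb.nafWeight_bsdVal] using hammingNorm_le_card_fintype (x := b)

theorem Zfun_add_nafWeight {n k : ℕ} (hn : n ∈ NAFInterval k) : Zfun n + nafWeight n = k := by
  rw [Zfun, nafLen_eq_of_mem hn, minWeight_eq_nafWeight hn,
    Nat.sub_add_cancel (nafWeight_le_of_mem hn)]

theorem mem_NAFInterval_succ {n k : ℕ} :
    n ∈ NAFInterval (k + 1) ↔ 2 ^ (k + 1) < 3 * n ∧ 3 * n < 2 ^ (k + 2) := by
  rw [NAFInterval, Set.mem_ofPred_eq, hasNAFLen_succ_iff_abs, Nat.abs_cast]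
  norm_cast

theorem three_mul_aseq_succ (k : ℕ) :
    3 * aseq (k + 1) = 2 ^ (k + 1) + 1 ∨ 3 * aseq (k + 1) = 2 ^ (k + 1) + 2 := by
  induction k using Nat.twoStepInduction with
  | zero | one => simp [aseq]
  | more k ih =>
    rw [aseq]
    grind

theorem NAFInterval_succ_eq_Icc (k : ℕ) :
    NAFInterval (k + 1) = Set.Icc (aseq (k + 1)) (2 ^ (k + 1) - aseq (k + 1)) := by
  ext n
  have ha := three_mul_aseq_succ k
  rw [mem_NAFInterval_succ, Set.mem_Icc, pow_succ' 2 (k + 1)]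
  have : 0 < 2 ^ (k + 1) := by positivity
  omega

theorem aseq_add_mem_NAFInterval {k v : ℕ} (hv : v < (NAFInterval (k + 1)).ncard) :
    aseq (k + 1) + v ∈ NAFInterval (k + 1) := by
  rw [NAFInterval_succ_eq_Icc, ← Finset.coe_Icc, Set.ncard_coe_finset, Nat.card_Icc] at hv
  rw [NAFInterval_succ_eq_Icc]
  constructor <;> omega

theorem two_pow_sub_mem_NAFInterval {k m : ℕ} (hm : m ∈ NAFInterval (k + 1)) :
    2 ^ (k + 1) - m ∈ NAFInterval (k + 1) := by
  rw [mem_NAFInterval_succ] at hm ⊢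
  rw [pow_succ' 2 (k + 1)] at hm ⊢
  omega

theorem nafWeight_two_pow_sub {k m : ℕ} (hm : m ∈ NAFInterval (k + 1)) :
    nafWeight (2 ^ (k + 1) - m : ℕ) = nafWeight m := by
  rw [mem_NAFInterval_succ] at hm
  zify at hm
  have hr : 3 * |(m : ℤ) - 2 ^ k| ≤ 2 ^ k := by grind
  calc nafWeight (2 ^ (k + 1) - m : ℕ)
      = nafWeight (2 ^ k + -(m - 2 ^ k)) := by grind
    _ = nafWeight (m - 2 ^ k) + 1 := by rw [nafWeight_two_pow_add (by rwa [abs_neg]), nafWeight_neg]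
    _ = nafWeight m := by rw [← nafWeight_two_pow_add hr, add_sub_cancel]

theorem Zfun_two_pow_sub {k m : ℕ} (hm : m ∈ NAFInterval (k + 1)) :
    Zfun (2 ^ (k + 1) - m) = Zfun m := by
  have hZ := Zfun_add_nafWeight hm
  have hZ' := Zfun_add_nafWeight (two_pow_sub_mem_NAFInterval hm)
  rw [nafWeight_two_pow_sub hm] at hZ'
  omega

theorem Zfun_eq_add_one_of_abs_sub_eq {k m n : ℕ} (hm : m ∈ NAFInterval (k + 1))
    (hn : |(n : ℤ) - 2 ^ (k + 2)| = m) : Zfun n = Zfun m + 1 := by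
  have hbounds := mem_NAFInterval_succ.1 hm
  zify at hbounds
  have hmem : n ∈ NAFInterval (k + 2 + 1) := by
    rw [mem_NAFInterval_succ]
    zify
    grind
  have hweight : nafWeight n = nafWeight m + 1 := by
    rw [← add_sub_cancel (2 ^ (k + 2)) (n : ℤ), nafWeight_two_pow_add (by grind), ← hn,
      nafWeight_abs]
  have hZm := Zfun_add_nafWeight hm
  have hZn := Zfun_add_nafWeight hmem
  omega

theorem Zfun_two_pow_succ_add {k m : ℕ} (hm : m ∈ NAFInterval (k + 1)) :
    Zfun (2 ^ (k + 2) + m) = Zfun m + 1 :=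
  Zfun_eq_add_one_of_abs_sub_eq hm (by simp)

theorem Zfun_two_pow_add {k m : ℕ} (hm : m ∈ NAFInterval (k + 1)) :
    Zfun (2 ^ (k + 1) + m) = Zfun m + 1 := by
  have hbounds := mem_NAFInterval_succ.1 hm
  rw [← Zfun_two_pow_sub hm]
  exact Zfun_eq_add_one_of_abs_sub_eq (two_pow_sub_mem_NAFInterval hm) (by zify; grind)

theorem zeros_opt_recursion (k v : ℕ) (hk : 3 ≤ k)
    (hv : v < (NAFInterval (k - 2)).ncard) :
    Zfun (aseq k + v) = Zfun (aseq (k - 2) + v) + 1 ∧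
    Zfun (2 ^ (k - 1) + aseq (k - 2) + v)
      = Zfun (2 ^ (k - 2) - (aseq (k - 2) + v)) + 1 := by
  obtain ⟨j, rfl⟩ : ∃ j, k = j + 3 := ⟨k - 3, by omega⟩
  change v < (NAFInterval (j + 1)).ncard at hv
  have hm : aseq (j + 1) + v ∈ NAFInterval (j + 1) := aseq_add_mem_NAFInterval hv
  change Zfun (2 ^ (j + 1) + aseq (j + 1) + v) = Zfun (aseq (j + 1) + v) + 1 ∧
    Zfun (2 ^ (j + 2) + aseq (j + 1) + v) = Zfun (2 ^ (j + 1) - (aseq (j + 1) + v)) + 1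
  rw [add_assoc, add_assoc, Zfun_two_pow_sub hm]
  exact ⟨Zfun_two_pow_add hm, Zfun_two_pow_succ_add hm⟩
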